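/- Let 1<p<∞ and let f be locally integrable on (0,∞). Suppose there is a constant C such that |∫_0^∞ f·φ'| ≤ C·‖φ/v₁‖_{p'} for all φ∈C_0^∞(0,∞), where v₁ is a weight with 1/v₁ locally in L^{p'}. Then f coincides a.e. with a locally absolutely continuous function f̃ whose derivative satisfies ‖v₁·f̃'‖_p ≤ C. -/

import Mathlib

open MeasureTheory Set

/-!
The bound says that the distributional derivative of `f` is controlled by the `L^{p'}`-norm of
`φ / v₁`. By Hahn–Banach and the duality of `L^{p'}` and `L^p` it is therefore
`φ ↦ ∫ k φ / v₁` for some `k` with `‖k‖_p ≤ C`, that is, the locally integrable function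
`u = k / v₁`. A primitive of `u` has the same distributional derivative as `f`, and a distribution
on an interval with zero derivative is constant because every test function of mean zero is the
derivative of a test function.

For a finite measure, a functional `L` on `L^q` has as density the Radon–Nikodym derivative of
`A ↦ L 𝟙_A`; a σ-finite measure `μ` reduces to a finite measure `g μ` through the isometry
`u ↦ g^{1/q} u` from `L^q(g μ)` onto `L^q(μ)`.
-/

section

open Filter Topology ENNReal
open scoped NNReal Distributions LineDeriv

section HahnBanach

variable {V E : Type*} [AddCommGroup V] [Module ℝ V] [NormedAddCommGroup E] [NormedSpace ℝ E]

theorem exists_strongDual_comp_eq_of_abs_le_mul_norm (T : V →ₗ[ℝ] E) (l : V →ₗ[ℝ] ℝ) {C : ℝ}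
    (hC : 0 ≤ C) (hl : ∀ v, |l v| ≤ C * ‖T v‖) :
    ∃ L : StrongDual ℝ E, ‖L‖ ≤ C ∧ ∀ v, L (T v) = l v := by
  obtain ⟨g, hg⟩ : ∃ g : Module.Dual ℝ E, T.dualMap g = l := by
    rw [← LinearMap.mem_range, LinearMap.range_dualMap_eq_dualAnnihilator_ker,
      Submodule.mem_dualAnnihilator]
    intro v hv
    simpa only [LinearMap.mem_ker.mp hv, norm_zero, mul_zero, abs_nonpos_iff] using hl v
  have hgT (v : V) : g (T v) = l v := LinearMap.congr_fun hg v
  have hg_le (y : LinearMap.range T) : ‖g.domRestrict (LinearMap.range T) y‖ ≤ C * ‖y‖ := by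
    obtain ⟨_, v, rfl⟩ := y
    exact (congr_arg abs (hgT v)).trans_le (hl v)
  obtain ⟨L, hL, hL_norm⟩ :=
    exists_extension_norm_eq (LinearMap.range T) (LinearMap.mkContinuous _ C hg_le)
  exact ⟨L, hL_norm.trans_le (LinearMap.mkContinuous_norm_le _ hC _),
    fun v => (hL ⟨T v, v, rfl⟩).trans (hgT v)⟩

end HahnBanach

section Riesz

variable {α : Type*} [MeasurableSpace α] {μ : Measure α}

theorem tendsto_measure_biUnion_symmDiff_iUnion [IsFiniteMeasure μ] {A : ℕ → Set α}
    (hA : ∀ i, MeasurableSet (A i)) (hd : Pairwise (Function.onFun Disjoint A)) :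
    Tendsto (fun t : Finset ℕ => μ (symmDiff (⋃ i ∈ t, A i) (⋃ i, A i))) atTop (𝓝 0) := by
  have h_sum : ∑' i, μ (A i) ≠ ∞ := measure_iUnion hd hA ▸ measure_ne_top μ _
  refine tendsto_of_tendsto_of_tendsto_of_le_of_le tendsto_const_nhds
    (tendsto_tsum_compl_atTop_zero h_sum) (fun _ => zero_le) fun t => ?_
  refine (measure_mono ?_).trans (measure_iUnion_le fun i : {i // i ∉ t} => A i)
  rw [symmDiff_of_le (iUnion₂_subset fun i _ => subset_iUnion A i)]
  rintro x ⟨hx, hxt⟩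
  obtain ⟨i, hi⟩ := mem_iUnion.mp hx
  exact mem_iUnion.mpr ⟨⟨i, fun hit => hxt (mem_biUnion hit hi)⟩, hi⟩

theorem sum_indicatorConstLp_eq_biUnion [IsFiniteMeasure μ] {E : Type*} [NormedAddCommGroup E]
    (r : ℝ≥0∞) (c : E) {ι : Type*} {A : ι → Set α}
    (hA : ∀ i, MeasurableSet (A i)) (hd : Pairwise (Function.onFun Disjoint A)) (t : Finset ι) :
    ∑ i ∈ t, indicatorConstLp r (hA i) (measure_ne_top μ _) c =
      indicatorConstLp r (t.measurableSet_biUnion fun i _ => hA i) (measure_ne_top μ _) c := by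
  classical
  induction t using Finset.induction_on with
  | empty => simp
  | insert a t ha ih =>
    have hdisj : Disjoint (A a) (⋃ i ∈ t, A i) :=
      disjoint_iUnion₂_right.mpr fun i hi => hd (ne_of_mem_of_not_mem hi ha).symm
    simp only [Finset.sum_insert ha, ih, Finset.set_biUnion_insert]
    exact (indicatorConstLp_disjoint_union _ _ _ _ hdisj c).symm

open Classical in
/-- The vector measure `A ↦ 𝟙_A`, with values in `L^r(μ)`; it turns a functional on
`L^r(μ)` into a signed measure. The value at a non-measurable set is `0`. -/
noncomputable def indicatorVectorMeasure (μ : Measure α) [IsFiniteMeasure μ] {r : ℝ≥0∞}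
    [Fact (1 ≤ r)] (hr : r ≠ ∞) : VectorMeasure α (Lp ℝ r μ) where
  measureOf' A := if hA : MeasurableSet A then
    indicatorConstLp r hA (measure_ne_top μ A) (1 : ℝ) else 0
  empty' := by simp
  not_measurable' A hA := dif_neg hA
  m_iUnion' A hA hd := by
    simp only [hA, MeasurableSet.iUnion hA, dite_true, HasSum,
      sum_indicatorConstLp_eq_biUnion r _ hA hd, SummationFilter.unconditional_filter]
    exact tendsto_indicatorConstLp_set hr (tendsto_measure_biUnion_symmDiff_iUnion hA hd)

theorem indicatorVectorMeasure_apply [IsFiniteMeasure μ] {r : ℝ≥0∞} [Fact (1 ≤ r)] (hr : r ≠ ∞)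
    {A : Set α} (hA : MeasurableSet A) :
    indicatorVectorMeasure μ hr A = indicatorConstLp r hA (measure_ne_top μ A) (1 : ℝ) :=
  dif_pos hA

theorem exists_density_of_strongDual_Lp [IsFiniteMeasure μ] {r : ℝ≥0∞} [Fact (1 ≤ r)]
    (hr : r ≠ ∞) (L : StrongDual ℝ (Lp ℝ r μ)) :
    ∃ k : α → ℝ, Measurable k ∧ Integrable k μ ∧ ∀ (A : Set α) (hA : MeasurableSet A),
      L (indicatorConstLp r hA (measure_ne_top μ A) (1 : ℝ)) = ∫ x in A, k x ∂μ := by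
  let s : SignedMeasure α :=
    (indicatorVectorMeasure μ hr).mapRange L.toLinearMap.toAddMonoidHom L.continuous
  have hs_apply {A : Set α} (hA : MeasurableSet A) :
      s A = L (indicatorConstLp r hA (measure_ne_top μ A) (1 : ℝ)) :=
    congr_arg L (indicatorVectorMeasure_apply hr hA)
  have hs : s ≪ᵥ μ.toENNRealVectorMeasure := by
    refine VectorMeasure.AbsolutelyContinuous.mk fun A hA hμA => ?_
    rw [Measure.toENNRealVectorMeasure_apply_measurable hA] at hμA
    have h_zero : indicatorConstLp r hA (measure_ne_top μ A) (1 : ℝ) = 0 := by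
      rw [← indicatorConstLp_empty, indicatorConstLp_inj hA _ _ _ one_ne_zero]
      exact ae_eq_empty.2 hμA
    rw [hs_apply hA, h_zero, map_zero]
  refine ⟨s.rnDeriv μ, s.measurable_rnDeriv μ, s.integrable_rnDeriv μ, fun A hA => ?_⟩
  rw [← withDensityᵥ_apply (s.integrable_rnDeriv μ) hA, s.withDensityᵥ_rnDeriv_eq μ hs,
    hs_apply hA]

theorem integrable_mul_simpleFunc {k : α → ℝ} (hk : Integrable k μ)
    (s : SimpleFunc α ℝ) : Integrable (fun x => k x * s x) μ := by
  obtain ⟨M, hM⟩ := s.exists_forall_norm_le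
  exact hk.mul_bdd (c := M) s.aestronglyMeasurable (Eventually.of_forall hM)

theorem strongDual_Lp_simpleFunc_eq_integral [IsFiniteMeasure μ] {r : ℝ≥0∞} [Fact (1 ≤ r)]
    (L : StrongDual ℝ (Lp ℝ r μ)) {k : α → ℝ} (hk : Integrable k μ)
    (hL : ∀ (A : Set α) (hA : MeasurableSet A),
      L (indicatorConstLp r hA (measure_ne_top μ A) (1 : ℝ)) = ∫ x in A, k x ∂μ)
    (s : SimpleFunc α ℝ) : L ((s.memLp_of_isFiniteMeasure r μ).toLp s) = ∫ x, k x * s x ∂μ := by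
  induction s using SimpleFunc.induction with
  | @const c A hA =>
    have h_coe : ⇑(SimpleFunc.piecewise A hA (.const α c) (.const α 0)) =
        c • A.indicator fun _ => (1 : ℝ) := by
      ext x
      by_cases hx : x ∈ A <;> simp [hx]
    have h_toLp := MemLp.toLp_const_smul c
      (memLp_indicator_const r hA (1 : ℝ) (.inr (measure_ne_top μ A)))
    simp only [h_coe, h_toLp, map_smul]
    refine (congr_arg (c • ·) (hL A hA)).trans ?_
    rw [← integral_indicator hA, smul_eq_mul, ← integral_const_mul]
    refine integral_congr_ae (Eventually.of_forall fun x => ?_)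
    by_cases hx : x ∈ A <;> simp [hx, mul_comm]
  | @add f g _ hf hg =>
    simp only [SimpleFunc.coe_add, Pi.add_apply, mul_add]
    rw [integral_add (integrable_mul_simpleFunc hk f) (integrable_mul_simpleFunc hk g), ← hf, ← hg,
      ← map_add, ← MemLp.toLp_add]

variable {p q : ℝ}

theorem rpow_inv_mul_rpow_inv (hpq : p.HolderConjugate q) {t : ℝ} (ht : 0 ≤ t) :
    t ^ p⁻¹ * t ^ q⁻¹ = t := by
  rw [← Real.rpow_add' ht (hpq.inv_add_inv_eq_one ▸ one_ne_zero), hpq.inv_add_inv_eq_one,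
    Real.rpow_one]

theorem le_rpow_of_le_mul_rpow_inv (hpq : p.HolderConjugate q) {C t : ℝ} (hC : 0 ≤ C) (ht : 0 ≤ t)
    (h : t ≤ C * t ^ q⁻¹) : t ≤ C ^ p := by
  rcases ht.eq_or_lt with rfl | ht
  · positivity
  · have h_root : t ^ p⁻¹ ≤ C := le_of_mul_le_mul_right
      ((rpow_inv_mul_rpow_inv hpq ht.le).trans_le h) (Real.rpow_pos_of_pos ht _)
    exact (Real.rpow_inv_le_iff_of_pos ht.le hC hpq.pos).mp h_root

theorem exists_simpleFunc_rpow_eq_and_le_mul (hpq : p.HolderConjugate q) {k : α → ℝ}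
    (hk : Measurable k) {φ : SimpleFunc α ℝ≥0} (hφ : ∀ x, (φ x : ℝ) ≤ |k x| ^ p) :
    ∃ s : SimpleFunc α ℝ, (∀ x, |s x| ^ q = φ x) ∧ ∀ x, (φ x : ℝ) ≤ k x * s x := by
  let s : SimpleFunc α ℝ := .piecewise {x | 0 ≤ k x} (measurableSet_le measurable_const hk)
    (φ.map fun y : ℝ≥0 => (y : ℝ) ^ q⁻¹) (φ.map fun y : ℝ≥0 => -(y : ℝ) ^ q⁻¹)
  have hs_abs (x : α) : |s x| = (φ x : ℝ) ^ q⁻¹ := by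
    by_cases hx : 0 ≤ k x <;> simp [s, hx, abs_of_nonneg, Real.rpow_nonneg]
  have hs_mul (x : α) : k x * s x = |k x| * (φ x : ℝ) ^ q⁻¹ := by
    by_cases hx : 0 ≤ k x
    · simp [s, hx, abs_of_nonneg]
    · simp [s, hx, abs_of_neg (not_le.mp hx)]
  refine ⟨s, fun x => ?_, fun x => ?_⟩
  · rw [hs_abs, Real.rpow_inv_rpow (φ x).coe_nonneg hpq.symm.ne_zero]
  · calc (φ x : ℝ) = (φ x : ℝ) ^ p⁻¹ * (φ x : ℝ) ^ q⁻¹ :=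
          (rpow_inv_mul_rpow_inv hpq (φ x).coe_nonneg).symm
      _ ≤ |k x| * (φ x : ℝ) ^ q⁻¹ := by
          gcongr
          exact (Real.rpow_inv_le_iff_of_pos (φ x).coe_nonneg (abs_nonneg _) hpq.pos).mpr (hφ x)
      _ = k x * s x := (hs_mul x).symm

theorem eLpNorm_le_of_forall_integral_mul_simpleFunc_le [IsFiniteMeasure μ]
    (hpq : p.HolderConjugate q) {k : α → ℝ} (hk_meas : Measurable k) (hk : Integrable k μ)
    {C : ℝ} (hC : 0 ≤ C)
    (h : ∀ s : SimpleFunc α ℝ, ∫ x, k x * s x ∂μ ≤ C * (∫ x, |s x| ^ q ∂μ) ^ q⁻¹) :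
    eLpNorm k (ENNReal.ofReal p) μ ≤ ENNReal.ofReal C := by
  rw [eLpNorm_eq_lintegral_rpow_enorm_toReal (by simp [hpq.pos]) ofReal_ne_top,
    toReal_ofReal hpq.nonneg, one_div, ENNReal.rpow_inv_le_iff hpq.pos,
    ENNReal.ofReal_rpow_of_nonneg hC hpq.nonneg, lintegral_eq_nnreal]
  refine iSup₂_le fun φ hφ => ?_
  have hφk (x : α) : (φ x : ℝ) ≤ |k x| ^ p := by
    simpa [← ofReal_norm, ENNReal.ofReal_rpow_of_nonneg, hpq.nonneg,
      ENNReal.le_ofReal_iff_toReal_le, Real.rpow_nonneg] using hφ x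
  obtain ⟨s, hs_rpow, hs_mul⟩ := exists_simpleFunc_rpow_eq_and_le_mul hpq hk_meas hφk
  have hφ_int : Integrable (fun x => (φ x : ℝ)) μ :=
    (φ.map ((↑) : ℝ≥0 → ℝ)).integrable_of_isFiniteMeasure
  have h_le : ∫ x, (φ x : ℝ) ∂μ ≤ C * (∫ x, (φ x : ℝ) ∂μ) ^ q⁻¹ :=
    calc ∫ x, (φ x : ℝ) ∂μ ≤ ∫ x, k x * s x ∂μ :=
          integral_mono hφ_int (integrable_mul_simpleFunc hk s) hs_mul
      _ ≤ C * (∫ x, (φ x : ℝ) ∂μ) ^ q⁻¹ := by simpa only [hs_rpow] using h s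
  rw [← SimpleFunc.lintegral_eq_lintegral]
  calc ∫⁻ x, (φ x : ℝ≥0∞) ∂μ = ENNReal.ofReal (∫ x, (φ x : ℝ) ∂μ) := by
        rw [ofReal_integral_eq_lintegral_ofReal hφ_int
          (Eventually.of_forall fun x => (φ x).coe_nonneg)]
        simp only [ofReal_coe_nnreal]
    _ ≤ ENNReal.ofReal (C ^ p) := ENNReal.ofReal_le_ofReal <|
        le_rpow_of_le_mul_rpow_inv hpq hC (integral_nonneg fun x => (φ x).coe_nonneg) h_le

theorem norm_toLp_ofReal (hq : 0 < q) {f : α → ℝ} (hf : MemLp f (ENNReal.ofReal q) μ) :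
    ‖hf.toLp f‖ = (∫ x, |f x| ^ q ∂μ) ^ q⁻¹ := by
  rw [Lp.norm_toLp, hf.eLpNorm_eq_integral_rpow_norm (by simp [hq]) ofReal_ne_top,
    toReal_ofReal hq.le, toReal_ofReal (by positivity)]
  rfl

theorem exists_eq_integral_of_strongDual_Lp_of_isFiniteMeasure [IsFiniteMeasure μ]
    (hpq : p.HolderConjugate q) [Fact (1 ≤ ENNReal.ofReal q)]
    (L : StrongDual ℝ (Lp ℝ (ENNReal.ofReal q) μ)) :
    ∃ k : α → ℝ, MemLp k (ENNReal.ofReal p) μ ∧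
      eLpNorm k (ENNReal.ofReal p) μ ≤ ENNReal.ofReal ‖L‖ ∧ ∀ f, L f = ∫ x, k x * f x ∂μ := by
  have : Fact (1 ≤ ENNReal.ofReal p) := ⟨one_le_ofReal.mpr hpq.lt.le⟩
  have : HolderConjugate (ENNReal.ofReal p) (ENNReal.ofReal q) := hpq.ennrealOfReal
  obtain ⟨k, hk_meas, hk, hLk⟩ := exists_density_of_strongDual_Lp ofReal_ne_top L
  have hLs := strongDual_Lp_simpleFunc_eq_integral L hk hLk
  have hk_norm : eLpNorm k (ENNReal.ofReal p) μ ≤ ENNReal.ofReal ‖L‖ := by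
    refine eLpNorm_le_of_forall_integral_mul_simpleFunc_le hpq hk_meas hk (norm_nonneg L)
      fun s => ?_
    rw [← hLs, ← norm_toLp_ofReal hpq.symm.pos (s.memLp_of_isFiniteMeasure _ μ)]
    exact (le_abs_self _).trans (L.le_opNorm _)
  have hk_memLp : MemLp k (ENNReal.ofReal p) μ :=
    ⟨hk_meas.aestronglyMeasurable, hk_norm.trans_lt ofReal_lt_top⟩
  let B := (ContinuousLinearMap.mul ℝ ℝ).lpPairing μ _ (ENNReal.ofReal q) (hk_memLp.toLp k)
  have hB (f : Lp ℝ (ENNReal.ofReal q) μ) : B f = ∫ x, k x * f x ∂μ := by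
    refine (ContinuousLinearMap.lpPairing_eq_integral _ _ _).trans (integral_congr_ae ?_)
    filter_upwards [hk_memLp.coeFn_toLp] with x hx
    rw [hx, ContinuousLinearMap.mul_apply']
  suffices ⇑L = B from ⟨k, hk_memLp, hk_norm, fun f => this ▸ hB f⟩
  refine (Lp.simpleFunc.denseRange ofReal_ne_top).equalizer L.continuous B.continuous
    (funext fun f => ?_)
  obtain ⟨s, hs, rfl⟩ : ∃ (s : SimpleFunc α ℝ) (hs : MemLp s (ENNReal.ofReal q) μ),
      SimpleFunc.toLp s hs = f := ⟨_, _, Lp.simpleFunc.toLp_toSimpleFunc f⟩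
  simp only [Function.comp_apply, hB, hLs]
  refine integral_congr_ae ?_
  filter_upwards [hs.coeFn_toLp] with x hx
  rw [hx]

section WithDensity

variable {E : Type*} [NormedAddCommGroup E] [NormedSpace ℝ E] {g : α → ℝ≥0}

theorem eLpNorm_withDensity (hp : 0 < p) (hg : Measurable g) (f : α → E) :
    eLpNorm f (ENNReal.ofReal p) (μ.withDensity fun x => g x) =
      eLpNorm (fun x => g x ^ p⁻¹ • f x) (ENNReal.ofReal p) μ := by
  have hp_ne : ENNReal.ofReal p ≠ 0 := by simpa using hp
  rw [eLpNorm_eq_lintegral_rpow_enorm_toReal hp_ne ofReal_ne_top,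
    eLpNorm_eq_lintegral_rpow_enorm_toReal hp_ne ofReal_ne_top, toReal_ofReal hp.le,
    lintegral_withDensity_eq_lintegral_mul_non_measurable _ hg.coe_nnreal_ennreal
      (Eventually.of_forall fun _ => coe_lt_top)]
  congr! 3 with x
  have h_weight : ((g x ^ p⁻¹ : ℝ≥0) : ℝ≥0∞) ^ p = g x := by
    rw [← ENNReal.coe_rpow_of_nonneg _ hp.le, NNReal.rpow_inv_rpow hp.ne']
  rw [Pi.mul_apply, NNReal.smul_def, enorm_smul, NNReal.enorm_eq,
    ENNReal.mul_rpow_of_nonneg _ _ hp.le, h_weight]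

theorem rpow_smul_ae_eq_of_ae_eq_withDensity (hg : Measurable g) {r : ℝ} (hr : r ≠ 0)
    {f₁ f₂ : α → E} (h : f₁ =ᵐ[μ.withDensity fun x => g x] f₂) :
    (fun x => g x ^ r • f₁ x) =ᵐ[μ] fun x => g x ^ r • f₂ x := by
  filter_upwards [(ae_withDensity_iff hg.coe_nnreal_ennreal).mp h] with x hx
  rcases eq_or_ne (g x) 0 with hgx | hgx
  · simp only [hgx, NNReal.zero_rpow hr, zero_smul]
  · rw [hx (coe_ne_zero.mpr hgx)]

theorem memLp_rpow_smul_of_withDensity (hp : 0 < p) (hg : Measurable g) {f : α → E}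
    (hf : MemLp f (ENNReal.ofReal p) (μ.withDensity fun x => g x)) :
    MemLp (fun x => g x ^ p⁻¹ • f x) (ENNReal.ofReal p) μ :=
  ⟨⟨_, (hg.pow_const p⁻¹).stronglyMeasurable.smul hf.1.stronglyMeasurable_mk,
    rpow_smul_ae_eq_of_ae_eq_withDensity hg (inv_ne_zero hp.ne') hf.1.ae_eq_mk⟩,
    (eLpNorm_withDensity hp hg f).symm.trans_lt hf.2⟩

/-- The isometry `u ↦ g ^ (1 / p) • u` from `L^p(g μ)` into `L^p(μ)`, which transports
duality from the measure `g μ` to `μ`. -/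
noncomputable def withDensityRpowSMulLI (μ : Measure α) [Fact (1 ≤ ENNReal.ofReal p)] (hp : 0 < p)
    (hg : Measurable g) :
    Lp E (ENNReal.ofReal p) (μ.withDensity fun x => g x) →ₗᵢ[ℝ] Lp E (ENNReal.ofReal p) μ where
  toFun u := (memLp_rpow_smul_of_withDensity hp hg (Lp.memLp u)).toLp _
  map_add' u v := by
    rw [← MemLp.toLp_add]
    refine MemLp.toLp_congr _ _ ((rpow_smul_ae_eq_of_ae_eq_withDensity hg (inv_ne_zero hp.ne')
      (Lp.coeFn_add u v)).trans (Eventually.of_forall fun x => ?_))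
    exact smul_add _ _ _
  map_smul' c u := by
    rw [RingHom.id_apply, ← MemLp.toLp_const_smul]
    refine MemLp.toLp_congr _ _ ((rpow_smul_ae_eq_of_ae_eq_withDensity hg (inv_ne_zero hp.ne')
      (Lp.coeFn_smul c u)).trans (Eventually.of_forall fun x => ?_))
    exact smul_comm _ _ _
  norm_map' u := by
    rw [LinearMap.coe_mk, AddHom.coe_mk, Lp.norm_toLp, Lp.norm_def, eLpNorm_withDensity hp hg]

theorem withDensityRpowSMulLI_ae_eq [Fact (1 ≤ ENNReal.ofReal p)] (hp : 0 < p) (hg : Measurable g)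
    (u : Lp E (ENNReal.ofReal p) (μ.withDensity fun x => g x)) :
    withDensityRpowSMulLI μ hp hg u =ᵐ[μ] fun x => g x ^ p⁻¹ • u x :=
  (memLp_rpow_smul_of_withDensity hp hg (Lp.memLp u)).coeFn_toLp

theorem withDensityRpowSMulLI_surjective [Fact (1 ≤ ENNReal.ofReal p)] (hp : 0 < p)
    (hg : Measurable g) (hg_pos : ∀ x, 0 < g x) :
    Function.Surjective (withDensityRpowSMulLI (E := E) μ hp hg) := by
  intro f
  have h_cancel (x : α) : g x ^ p⁻¹ • (g x ^ p⁻¹)⁻¹ • f x = f x :=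
    smul_inv_smul₀ (NNReal.rpow_pos (hg_pos x)).ne' _
  have hu : MemLp (fun x => (g x ^ p⁻¹)⁻¹ • f x) (ENNReal.ofReal p)
      (μ.withDensity fun x => g x) := by
    refine ⟨?_, ?_⟩
    · exact ((hg.pow_const p⁻¹).inv.stronglyMeasurable.aestronglyMeasurable.smul
        (Lp.aestronglyMeasurable f)).mono_ac (withDensity_absolutelyContinuous μ _)
    · simpa only [eLpNorm_withDensity hp hg, h_cancel] using Lp.eLpNorm_lt_top f
  refine ⟨hu.toLp _, Lp.ext ((withDensityRpowSMulLI_ae_eq hp hg _).trans ?_)⟩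
  refine (rpow_smul_ae_eq_of_ae_eq_withDensity hg (inv_ne_zero hp.ne') hu.coeFn_toLp).trans ?_
  exact Eventually.of_forall h_cancel

end WithDensity

theorem exists_eq_integral_of_strongDual_Lp [SigmaFinite μ]
    (hpq : p.HolderConjugate q) [Fact (1 ≤ ENNReal.ofReal q)]
    (L : StrongDual ℝ (Lp ℝ (ENNReal.ofReal q) μ)) :
    ∃ k : α → ℝ, MemLp k (ENNReal.ofReal p) μ ∧
      eLpNorm k (ENNReal.ofReal p) μ ≤ ENNReal.ofReal ‖L‖ ∧ ∀ f, L f = ∫ x, k x * f x ∂μ := by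
  obtain ⟨g, hg_pos, hg, hg_int⟩ := exists_pos_lintegral_lt_of_sigmaFinite μ one_ne_zero
  have : IsFiniteMeasure (μ.withDensity fun x => g x) :=
    isFiniteMeasure_withDensity (hg_int.trans one_lt_top).ne
  have hp := hpq.pos
  have hq := hpq.symm.pos
  let J := withDensityRpowSMulLI (E := ℝ) μ hq hg
  obtain ⟨k, hk, hk_norm, hLk⟩ := exists_eq_integral_of_strongDual_Lp_of_isFiniteMeasure hpq
    (L.comp J.toContinuousLinearMap)
  refine ⟨fun x => g x ^ p⁻¹ • k x, memLp_rpow_smul_of_withDensity hp hg hk, ?_, fun f => ?_⟩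
  · rw [← eLpNorm_withDensity hp hg]
    exact hk_norm.trans (ENNReal.ofReal_le_ofReal <| (L.opNorm_comp_le _).trans <|
      mul_le_of_le_one_right (norm_nonneg L) J.norm_toContinuousLinearMap_le)
  · obtain ⟨u, rfl⟩ := withDensityRpowSMulLI_surjective hq hg hg_pos f
    refine (hLk u).trans ?_
    rw [integral_withDensity_eq_integral_smul hg]
    refine integral_congr_ae ?_
    filter_upwards [withDensityRpowSMulLI_ae_eq hq hg u] with x hx
    rw [hx]
    simp only [NNReal.smul_def, NNReal.coe_rpow, smul_eq_mul]
    rw [mul_mul_mul_comm, rpow_inv_mul_rpow_inv hpq (g x).coe_nonneg]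

end Riesz

section Distributions

theorem memLp_ofReal_of_integrable_rpow {α : Type*} [MeasurableSpace α] {μ : Measure α} {a : α → ℝ}
    {q : ℝ} (hq : 0 < q) (ha : ∀ x, 0 ≤ a x) (h : Integrable (fun x => a x ^ q) μ) :
    MemLp a (ENNReal.ofReal q) μ := by
  have h_root : (fun x => (a x ^ q) ^ q⁻¹) = a :=
    funext fun x => Real.rpow_rpow_inv (ha x) hq.ne'
  have ha_meas : AEStronglyMeasurable a μ :=
    h_root ▸ (h.aestronglyMeasurable.aemeasurable.pow_const q⁻¹).aestronglyMeasurable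
  rw [← integrable_norm_rpow_iff ha_meas (by simpa using hq) ofReal_ne_top, toReal_ofReal hq.le]
  simpa only [Real.norm_of_nonneg (ha _)] using h

theorem locallyIntegrableOn_mul {X : Type*} [TopologicalSpace X] [MeasurableSpace X]
    [LocallyCompactSpace X] {μ : Measure X} {Ω : Set X} (hΩ : IsLocallyClosed Ω) {r s : ℝ≥0∞}
    [r.HolderConjugate s] {a k : X → ℝ} (hk : MemLp k r μ)
    (ha : ∀ K ⊆ Ω, IsCompact K → MemLp a s (μ.restrict K)) :
    LocallyIntegrableOn (fun x => k x * a x) Ω μ :=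
  (locallyIntegrableOn_iff hΩ).mpr fun K hKΩ hK => (hk.restrict K).integrable_mul (ha K hKΩ hK)

variable {E : Type*} [NormedAddCommGroup E] [NormedSpace ℝ E] [MeasurableSpace E] [BorelSpace E]
  {Ω : TopologicalSpace.Opens E} {μ : Measure E} {a f : E → ℝ} {p q : ℝ}

/-- The distribution `φ ↦ ∫ φ f dμ` on `Ω`, the zero distribution if `f` is not locally
`μ`-integrable on `Ω`. -/
noncomputable def regularDistribution (Ω : TopologicalSpace.Opens E) (μ : Measure E) (f : E → ℝ) :
    𝓓'(Ω, ℝ) :=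
  (TestFunction.integralAgainstBilinCLM (ContinuousLinearMap.mul ℝ ℝ) μ f : 𝓓(Ω, ℝ) →L[ℝ] ℝ)

theorem regularDistribution_apply (hf : LocallyIntegrableOn f Ω μ) (φ : 𝓓(Ω, ℝ)) :
    regularDistribution Ω μ f φ = ∫ x, φ x * f x ∂μ :=
  TestFunction.integralAgainstBilinCLM_eq_integral hf

theorem regularDistribution_add {g : E → ℝ} (hf : LocallyIntegrableOn f Ω μ)
    (hg : LocallyIntegrableOn g Ω μ) :
    regularDistribution Ω μ (f + g) = regularDistribution Ω μ f + regularDistribution Ω μ g := by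
  ext φ
  change regularDistribution Ω μ (f + g) φ =
    regularDistribution Ω μ f φ + regularDistribution Ω μ g φ
  rw [regularDistribution_apply hf, regularDistribution_apply hg,
    regularDistribution_apply (hf.add hg), ← integral_add]
  · simp only [Pi.add_apply, mul_add]
  exacts [φ.integrable_bilin (ContinuousLinearMap.mul ℝ ℝ) hf,
    φ.integrable_bilin (ContinuousLinearMap.mul ℝ ℝ) hg]

theorem memLp_mul_testFunction {r : ℝ≥0∞}
    (ha : ∀ K ⊆ (Ω : Set E), IsCompact K → MemLp a r (μ.restrict K)) (φ : 𝓓(Ω, ℝ)) :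
    MemLp (fun x => a x * φ x) r μ := by
  have h_restrict : MemLp (fun x => a x * φ x) r (μ.restrict (tsupport φ)) :=
    φ.memLp_top.mul' (ha _ φ.tsupport_subset φ.hasCompactSupport)
  rw [← memLp_indicator_iff_restrict (isClosed_tsupport φ).measurableSet] at h_restrict
  rwa [indicator_eq_self.mpr] at h_restrict
  exact (Function.support_mul_subset_right a φ).trans (subset_tsupport φ)

/-- Multiplication by a function in `L^r_loc(Ω)`, as a linear map from the test functions on `Ω`
to `L^r`, in which the bound on a distribution is expressed. -/
noncomputable def mulTestFunctionToLp {r : ℝ≥0∞}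
    (ha : ∀ K ⊆ (Ω : Set E), IsCompact K → MemLp a r (μ.restrict K)) :
    𝓓(Ω, ℝ) →ₗ[ℝ] Lp ℝ r μ where
  toFun φ := (memLp_mul_testFunction ha φ).toLp _
  map_add' φ ψ := by
    rw [← MemLp.toLp_add]
    congr 1 with x
    exact mul_add _ _ _
  map_smul' c φ := by
    rw [RingHom.id_apply, ← MemLp.toLp_const_smul]
    congr 1 with x
    exact mul_left_comm _ _ _

theorem coeFn_mulTestFunctionToLp {r : ℝ≥0∞}
    (ha : ∀ K ⊆ (Ω : Set E), IsCompact K → MemLp a r (μ.restrict K)) (φ : 𝓓(Ω, ℝ)) :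
    mulTestFunctionToLp ha φ =ᵐ[μ] fun x => a x * φ x :=
  (memLp_mul_testFunction ha φ).coeFn_toLp

theorem exists_memLp_eq_regularDistribution_mul [LocallyCompactSpace E] [SigmaFinite μ]
    (hpq : p.HolderConjugate q) {T : 𝓓'(Ω, ℝ)} {C : ℝ} (hC : 0 ≤ C)
    (ha : ∀ K ⊆ (Ω : Set E), IsCompact K → MemLp a (ENNReal.ofReal q) (μ.restrict K))
    (hT : ∀ φ, |T φ| ≤ C * (∫ x, |a x * φ x| ^ q ∂μ) ^ q⁻¹) :
    ∃ k : E → ℝ, MemLp k (ENNReal.ofReal p) μ ∧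
      eLpNorm k (ENNReal.ofReal p) μ ≤ ENNReal.ofReal C ∧
      T = regularDistribution Ω μ fun x => k x * a x := by
  have : (ENNReal.ofReal p).HolderConjugate (ENNReal.ofReal q) := hpq.ennrealOfReal
  have : Fact (1 ≤ ENNReal.ofReal q) := ⟨by simpa using hpq.symm.lt.le⟩
  obtain ⟨L, hL_norm, hL⟩ := exists_strongDual_comp_eq_of_abs_le_mul_norm
    (mulTestFunctionToLp ha) (T : 𝓓(Ω, ℝ) →L[ℝ] ℝ).toLinearMap hC fun φ => (hT φ).trans_eq <|
      congr_arg (C * ·) (norm_toLp_ofReal hpq.symm.pos (memLp_mul_testFunction ha φ)).symm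
  obtain ⟨k, hk, hk_norm, hkL⟩ := exists_eq_integral_of_strongDual_Lp hpq L
  refine ⟨k, hk, hk_norm.trans (ENNReal.ofReal_le_ofReal hL_norm), ?_⟩
  ext φ
  calc T φ = ∫ x, k x * mulTestFunctionToLp ha φ x ∂μ := (hL φ).symm.trans (hkL _)
    _ = ∫ x, φ x * (k x * a x) ∂μ := by
      refine integral_congr_ae ?_
      filter_upwards [coeFn_mulTestFunctionToLp ha φ] with x hx
      rw [hx]
      ring
    _ = regularDistribution Ω μ (fun x => k x * a x) φ :=
      (regularDistribution_apply (locallyIntegrableOn_mul Ω.isOpen.isLocallyClosed hk ha) φ).symm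

theorem exists_eq_regularDistribution_of_abs_le_weighted [LocallyCompactSpace E] [SigmaFinite μ]
    (hpq : p.HolderConjugate q) {T : 𝓓'(Ω, ℝ)} {v : E → ℝ} {C : ℝ} (hC : 0 ≤ C)
    (hv : LocallyIntegrableOn (fun x => |1 / v x| ^ q) Ω μ)
    (hT : ∀ φ, |T φ| ≤ C * (∫ x, |φ x / v x| ^ q ∂μ) ^ q⁻¹) :
    ∃ u : E → ℝ, LocallyIntegrableOn u Ω μ ∧
      eLpNorm (fun x => v x * u x) (ENNReal.ofReal p) μ ≤ ENNReal.ofReal C ∧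
      T = regularDistribution Ω μ u := by
  have : (ENNReal.ofReal p).HolderConjugate (ENNReal.ofReal q) := hpq.ennrealOfReal
  have ha (K) (hKΩ : K ⊆ (Ω : Set E)) (hK : IsCompact K) :
      MemLp (fun x => |1 / v x|) (ENNReal.ofReal q) (μ.restrict K) :=
    memLp_ofReal_of_integrable_rpow hpq.symm.pos (fun _ => abs_nonneg _)
      (hv.integrableOn_compact_subset hKΩ hK)
  have h_abs (φ : 𝓓(Ω, ℝ)) (x : E) : |φ x / v x| = |(|1 / v x| * φ x)| := by
    rw [abs_mul, abs_abs, ← abs_mul, one_div_mul_eq_div]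
  simp only [h_abs] at hT
  obtain ⟨k, hk, hk_norm, hkT⟩ := exists_memLp_eq_regularDistribution_mul hpq hC ha hT
  refine ⟨_, locallyIntegrableOn_mul Ω.isOpen.isLocallyClosed hk ha,
    (eLpNorm_mono fun x => ?_).trans hk_norm, hkT⟩
  calc ‖v x * (k x * |1 / v x|)‖ = |v x * (1 / v x)| * ‖k x‖ := by
        simp only [norm_mul, Real.norm_eq_abs, abs_abs, abs_mul]
        ring
    _ ≤ 1 * ‖k x‖ := by
        gcongr
        rw [mul_one_div, abs_div]
        exact div_self_le_one _
    _ = ‖k x‖ := one_mul _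

end Distributions

section BumpFunction

variable {E : Type*} [NormedAddCommGroup E] [NormedSpace ℝ E] [FiniteDimensional ℝ E]
  [MeasurableSpace E] [BorelSpace E] {Ω : TopologicalSpace.Opens E} {f g : E → ℝ}

theorem exists_testFunction_integral_eq_one (μ : Measure E) [IsLocallyFiniteMeasure μ]
    [μ.IsOpenPosMeasure] (hΩ : (Ω : Set E).Nonempty) : ∃ ψ : 𝓓(Ω, ℝ), ∫ x, ψ x ∂μ = 1 := by
  obtain ⟨c, hc⟩ := hΩ
  obtain ⟨ε, hε, hεΩ⟩ := Metric.nhds_basis_closedBall.mem_iff.mp (Ω.isOpen.mem_nhds hc)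
  let ψ : ContDiffBump c := ⟨ε / 2, ε, half_pos hε, half_lt_self hε⟩
  exact ⟨⟨ψ.normed μ, ψ.contDiff_normed, ψ.hasCompactSupport_normed,
    ψ.tsupport_normed_eq.trans_subset hεΩ⟩, ψ.integral_normed⟩

theorem ae_restrict_eq_of_regularDistribution_eq {μ : Measure E} (hf : LocallyIntegrableOn f Ω μ)
    (hg : LocallyIntegrableOn g Ω μ)
    (h : regularDistribution Ω μ f = regularDistribution Ω μ g) : f =ᵐ[μ.restrict Ω] g := by
  refine (ae_restrict_iff' Ω.isOpen.measurableSet).mpr ?_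
  suffices ∀ᵐ x ∂μ, x ∈ (Ω : Set E) → (f - g) x = 0 from
    this.mono fun x hx hxΩ => sub_eq_zero.mp (hx hxΩ)
  refine Ω.isOpen.ae_eq_zero_of_integral_contDiff_smul_eq_zero (hf.sub hg) fun η hη hη_cpt hηΩ => ?_
  let φ : 𝓓(Ω, ℝ) := ⟨η, hη, hη_cpt, hηΩ⟩
  have hφ : ∫ x, φ x * f x ∂μ = ∫ x, φ x * g x ∂μ := by
    rw [← regularDistribution_apply hf, h, regularDistribution_apply hg]
  calc ∫ x, φ x * (f x - g x) ∂μ = ∫ x, φ x * f x - φ x * g x ∂μ := by simp only [mul_sub]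
    _ = 0 := by
      rw [integral_sub, hφ, sub_self]
      exacts [φ.integrable_bilin (ContinuousLinearMap.mul ℝ ℝ) hf,
        φ.integrable_bilin (ContinuousLinearMap.mul ℝ ℝ) hg]

end BumpFunction

section RealLine

variable {Ω : TopologicalSpace.Opens ℝ} {f u : ℝ → ℝ} {a b c : ℝ}

theorem coe_lineDerivOp_one (φ : 𝓓(Ω, ℝ)) : ⇑(∂_{(1 : ℝ)} φ : 𝓓(Ω, ℝ)) = deriv φ := by
  ext x
  refine (TestFunction.lineDerivCLM_apply_of_le le_rfl).trans ?_
  simp only [lineDeriv, smul_eq_mul, mul_one, deriv_comp_const_add, add_zero]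
  rfl

theorem lineDerivOp_regularDistribution_apply (hf : LocallyIntegrableOn f Ω) (φ : 𝓓(Ω, ℝ)) :
    (∂_{(1 : ℝ)} (regularDistribution Ω volume f) : 𝓓'(Ω, ℝ)) φ =
      -∫ x in Ω, f x * deriv φ x := by
  have h_zero (x) (hx : x ∉ Ω) : f x * deriv φ x = 0 := by
    rw [← coe_lineDerivOp_one, image_eq_zero_of_notMem_tsupport fun h =>
      hx (TestFunction.tsupport_subset _ h), mul_zero]
  rw [Distribution.lineDerivOp_apply_apply, map_neg, regularDistribution_apply hf,
    coe_lineDerivOp_one, setIntegral_eq_integral_of_forall_compl_eq_zero h_zero]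
  simp only [mul_comm]

theorem exists_support_subset_Ioo (φ : 𝓓(Ω, ℝ)) (hc : c ∈ Ω) :
    ∃ a ∈ Ω, ∃ b ∈ Ω, c ∈ Icc a b ∧ Function.support φ ⊆ Ioo a b := by
  have hK : IsCompact (insert c (tsupport φ)) := φ.hasCompactSupport.isCompact.insert c
  have hKΩ : insert c (tsupport φ) ⊆ Ω := insert_subset hc φ.tsupport_subset
  have hK_Icc := hK.isBounded.subset_Icc_sInf_sSup
  refine ⟨_, hKΩ (hK.sInf_mem (insert_nonempty _ _)), _, hKΩ (hK.sSup_mem (insert_nonempty _ _)),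
    hK_Icc (mem_insert _ _), ?_⟩
  rw [← interior_Icc]
  exact interior_maximal (((subset_tsupport φ).trans (subset_insert _ _)).trans hK_Icc)
    φ.continuous.isOpen_support

theorem intervalIntegral_eq_integral_of_support_subset_Icc {E : Type*} [NormedAddCommGroup E]
    [NormedSpace ℝ E] {g : ℝ → E} (hab : a ≤ b) (hg : Function.support g ⊆ Icc a b) :
    ∫ x in a..b, g x = ∫ x, g x := by
  rw [intervalIntegral.integral_of_le hab, ← integral_Icc_eq_integral_Ioc,
    setIntegral_eq_integral_of_forall_compl_eq_zero]
  exact fun x hx => Function.notMem_support.mp fun h => hx (hg h)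

theorem intervalIntegrable_of_mem_ordConnected {s : Set ℝ} [s.OrdConnected]
    (hu : LocallyIntegrableOn u s) (ha : a ∈ s) (hb : b ∈ s) : IntervalIntegrable u volume a b :=
  (hu.integrableOn_compact_subset (OrdConnected.uIcc_subset ‹_› ha hb) isCompact_uIcc)
    |>.intervalIntegrable

theorem integral_mul_eq_sub_integral_deriv_mul_primitive {φ : ℝ → ℝ} (hφ : ContDiff ℝ 1 φ)
    (hu : IntervalIntegrable u volume a b) (hc : c ∈ uIcc a b) :
    ∫ x in a..b, φ x * u x = φ b * (∫ t in c..b, u t) - φ a * (∫ t in c..a, u t) -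
      ∫ x in a..b, deriv φ x * ∫ t in c..x, u t := by
  have h_deriv : ∀ᵐ x, x ∈ uIoc a b → φ x * u x = φ x * deriv (fun x => ∫ t in c..x, u t) x := by
    filter_upwards [hu.ae_hasDerivAt_integral] with x hx hx_mem
    rw [(hx (uIoc_subset_uIcc hx_mem) c hc).deriv]
  rw [intervalIntegral.integral_congr_ae h_deriv]
  exact hφ.contDiffOn.absolutelyContinuousOnInterval.integral_mul_deriv_eq_deriv_mul <|
    hu.absolutelyContinuousOnInterval_intervalIntegral hc

variable [(Ω : Set ℝ).OrdConnected]

theorem continuousOn_primitive_of_locallyIntegrableOn (hu : LocallyIntegrableOn u Ω)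
    (hc : c ∈ Ω) : ContinuousOn (fun x => ∫ t in c..x, u t) Ω := by
  intro x hx
  obtain ⟨a, b, hx_mem, hx_nhds, hab⟩ := exists_Icc_mem_subset_of_mem_nhds (Ω.isOpen.mem_nhds hx)
  have ha : a ∈ Ω := hab (left_mem_Icc.mpr (hx_mem.1.trans hx_mem.2))
  have hb : b ∈ Ω := hab (right_mem_Icc.mpr (hx_mem.1.trans hx_mem.2))
  have h_cont := intervalIntegral.continuousOn_primitive_interval' (a := c)
    (intervalIntegrable_of_mem_ordConnected hu (a := min a c) (b := max b c)
      (by rcases min_choice a c with h | h <;> rwa [h])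
      (by rcases max_choice b c with h | h <;> rwa [h]))
    (Icc_subset_uIcc ⟨min_le_right _ _, le_max_right _ _⟩)
  exact (h_cont.continuousAt <| mem_of_superset hx_nhds <|
    (Icc_subset_Icc (min_le_left _ _) (le_max_left _ _)).trans Icc_subset_uIcc).continuousWithinAt

theorem lineDerivOp_regularDistribution_primitive (hu : LocallyIntegrableOn u Ω) (hc : c ∈ Ω) :
    ∂_{(1 : ℝ)} (regularDistribution Ω volume fun x => ∫ t in c..x, u t) =
      regularDistribution Ω volume u := by
  have hF := (continuousOn_primitive_of_locallyIntegrableOn hu hc).locallyIntegrableOn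
    (μ := volume) Ω.isOpen.measurableSet
  ext φ
  rw [Distribution.lineDerivOp_apply_apply, map_neg, regularDistribution_apply hF,
    regularDistribution_apply hu, coe_lineDerivOp_one]
  obtain ⟨a, ha, b, hb, hcab, hφ⟩ := exists_support_subset_Ioo φ hc
  have hu_ab := intervalIntegrable_of_mem_ordConnected hu ha hb
  have hab : a ≤ b := hcab.1.trans hcab.2
  have hφ_zero {x : ℝ} (hx : x ∉ Ioo a b) : φ x = 0 :=
    Function.notMem_support.mp fun h => hx (hφ h)
  have hφ_Icc : tsupport φ ⊆ Icc a b :=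
    closure_minimal (hφ.trans Ioo_subset_Icc_self) isClosed_Icc
  have h_parts := integral_mul_eq_sub_integral_deriv_mul_primitive
    (φ.contDiff.of_le (mod_cast le_top)) hu_ab (Icc_subset_uIcc hcab)
  rw [hφ_zero right_notMem_Ioo, hφ_zero left_notMem_Ioo, zero_mul, zero_mul, sub_zero,
    zero_sub] at h_parts
  calc -∫ x, deriv φ x * ∫ t in c..x, u t = -∫ x in a..b, deriv φ x * ∫ t in c..x, u t := by
        rw [intervalIntegral_eq_integral_of_support_subset_Icc hab]
        exact (Function.support_mul_subset_left _ _).trans (support_deriv_subset.trans hφ_Icc)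
    _ = ∫ x in a..b, φ x * u x := h_parts.symm
    _ = ∫ x, φ x * u x := intervalIntegral_eq_integral_of_support_subset_Icc hab <|
      (Function.support_mul_subset_left _ _).trans ((subset_tsupport φ).trans hφ_Icc)

theorem exists_deriv_eq_of_integral_eq_zero {η : 𝓓(Ω, ℝ)} (hη : ∫ x, η x = 0) (hc : c ∈ Ω) :
    ∃ φ : 𝓓(Ω, ℝ), deriv φ = η := by
  obtain ⟨a, ha, b, hb, hcab, hη_supp⟩ := exists_support_subset_Ioo η hc
  have h0 {x} (hx : x ∉ Ioo a b) : η x = 0 := Function.notMem_support.mp fun h => hx (hη_supp h)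
  have h_deriv (x : ℝ) : HasDerivAt (fun x => ∫ t in a..x, η t) (η x) x :=
    (η.continuous.integral_hasStrictDerivAt a x).hasDerivAt
  have h_deriv_eq : deriv (fun x => ∫ t in a..x, η t) = η := funext fun x => (h_deriv x).deriv
  have h_zero (x : ℝ) (hx : x ∉ Icc a b) : ∫ t in a..x, η t = 0 := by
    rcases not_and_or.mp hx with hxa | hbx
    · rw [intervalIntegral.integral_congr (g := fun _ => 0), intervalIntegral.integral_zero]
      intro t ht
      rw [uIcc_of_ge (not_le.mp hxa).le] at ht
      exact h0 fun h => ht.2.not_gt h.1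
    · have hbx : b ≤ x := (not_le.mp hbx).le
      rw [intervalIntegral_eq_integral_of_support_subset_Icc (hcab.1.trans (hcab.2.trans hbx)), hη]
      exact hη_supp.trans (Ioo_subset_Icc_self.trans (Icc_subset_Icc_right hbx))
  refine ⟨⟨fun x => ∫ t in a..x, η t, ?_, .intro isCompact_Icc h_zero, ?_⟩, h_deriv_eq⟩
  · exact contDiff_infty_iff_deriv.mpr
      ⟨fun x => (h_deriv x).differentiableAt, by simpa only [h_deriv_eq] using η.contDiff⟩
  · exact (closure_minimal (Function.support_subset_iff'.mpr h_zero) isClosed_Icc).trans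
      (OrdConnected.out ‹_› ha hb)

theorem exists_eq_regularDistribution_const_of_lineDerivOp_eq_zero {T : 𝓓'(Ω, ℝ)}
    (hT : (∂_{(1 : ℝ)} T : 𝓓'(Ω, ℝ)) = 0) (hΩ : (Ω : Set ℝ).Nonempty) :
    ∃ c : ℝ, T = regularDistribution Ω volume fun _ => c := by
  obtain ⟨ψ, hψ⟩ := exists_testFunction_integral_eq_one volume hΩ
  obtain ⟨x₀, hx₀⟩ := hΩ
  refine ⟨T ψ, ?_⟩
  ext φ
  have hint (η : 𝓓(Ω, ℝ)) : Integrable η :=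
    η.continuous.integrable_of_hasCompactSupport η.hasCompactSupport
  have h_mean_zero : ∫ x, (φ - (∫ x, φ x) • ψ) x = 0 := by
    change ∫ x, φ x - (∫ x, φ x) * ψ x = 0
    rw [integral_sub (hint φ) ((hint ψ).const_mul _), integral_const_mul, hψ, mul_one, sub_self]
  obtain ⟨ζ, hζ⟩ := exists_deriv_eq_of_integral_eq_zero h_mean_zero hx₀
  have hTζ : T (φ - (∫ x, φ x) • ψ) = 0 := by
    rw [← DFunLike.coe_injective ((coe_lineDerivOp_one ζ).trans hζ)]
    have hTζ' := DFunLike.congr_fun hT ζ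
    rw [Distribution.lineDerivOp_apply_apply, map_neg] at hTζ'
    exact neg_eq_zero.mp hTζ'
  rw [map_sub, map_smul, sub_eq_zero] at hTζ
  rw [hTζ, regularDistribution_apply (locallyIntegrableOn_const _), integral_mul_const, smul_eq_mul]

theorem exists_ae_eq_const_add_primitive (hf : LocallyIntegrableOn f Ω)
    (hu : LocallyIntegrableOn u Ω) (hc : c ∈ Ω)
    (hfu : ∂_{(1 : ℝ)} (regularDistribution Ω volume f) = regularDistribution Ω volume u) :
    ∃ d : ℝ, f =ᵐ[volume.restrict Ω] fun x => d + ∫ t in c..x, u t := by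
  have hF := (continuousOn_primitive_of_locallyIntegrableOn hu hc).locallyIntegrableOn
    (μ := volume) Ω.isOpen.measurableSet
  have h_sub : ∂_{(1 : ℝ)} (regularDistribution Ω volume f -
      regularDistribution Ω volume fun x => ∫ t in c..x, u t) = 0 := by
    rw [← LineDeriv.lineDerivOpCLM_apply (R := ℝ), map_sub, LineDeriv.lineDerivOpCLM_apply,
      LineDeriv.lineDerivOpCLM_apply, hfu, lineDerivOp_regularDistribution_primitive hu hc,
      sub_self]
  obtain ⟨d, hd⟩ := exists_eq_regularDistribution_const_of_lineDerivOp_eq_zero h_sub ⟨c, hc⟩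
  have hd_int : LocallyIntegrableOn (fun _ : ℝ => d) Ω := locallyIntegrableOn_const d
  refine ⟨d, ae_restrict_eq_of_regularDistribution_eq hf (hd_int.add hF) ?_⟩
  exact (sub_eq_iff_eq_add.mp hd).trans (regularDistribution_add hd_int hF).symm

end RealLine

theorem distributional_derivative_representation_general {Ω : Set ℝ} (hΩ : IsOpen Ω)
    [Ω.OrdConnected] {p q C : ℝ} (hpq : p.HolderConjugate q) {v f : ℝ → ℝ}
    (hv : LocallyIntegrableOn (fun x => |1 / v x| ^ q) Ω) (hf : LocallyIntegrableOn f Ω)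
    (hbound : ∀ φ : ℝ → ℝ, ContDiff ℝ (⊤ : ℕ∞) φ → HasCompactSupport φ → tsupport φ ⊆ Ω →
      |∫ x in Ω, f x * deriv φ x| ≤ C * (∫ x in Ω, |φ x / v x| ^ q) ^ (1 / q)) :
    ∃ ftilde u : ℝ → ℝ,
      f =ᵐ[volume.restrict Ω] ftilde ∧
      (∀ a ∈ Ω, ∀ b ∈ Ω,
        IntervalIntegrable u volume a b ∧ ftilde b - ftilde a = ∫ x in a..b, u x) ∧
      eLpNorm (fun x => v x * u x) (ENNReal.ofReal p) (volume.restrict Ω)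
        ≤ ENNReal.ofReal C := by
  rcases Ω.eq_empty_or_nonempty with rfl | ⟨c, hc⟩
  · exact ⟨0, 0, by simp [Filter.EventuallyEq], by simp, by simp⟩
  let U : TopologicalSpace.Opens ℝ := ⟨Ω, hΩ⟩
  have hT (φ : 𝓓(U, ℝ)) :
      |(∂_{(1 : ℝ)} (regularDistribution U volume f) : 𝓓'(U, ℝ)) φ|
        ≤ max C 0 * (∫ x, |φ x / v x| ^ q) ^ q⁻¹ := by
    have hφ {x} (hx : x ∉ Ω) : φ x = 0 :=
      image_eq_zero_of_notMem_tsupport fun h => hx (φ.tsupport_subset h)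
    have h_right : ∫ x in Ω, |φ x / v x| ^ q = ∫ x, |φ x / v x| ^ q :=
      setIntegral_eq_integral_of_forall_compl_eq_zero fun x hx => by
        rw [hφ hx, zero_div, abs_zero, Real.zero_rpow hpq.symm.ne_zero]
    rw [lineDerivOp_regularDistribution_apply hf, abs_neg, ← h_right, ← one_div]
    exact (hbound φ φ.contDiff φ.hasCompactSupport φ.tsupport_subset).trans <|
      mul_le_mul_of_nonneg_right (le_max_left _ _) (by positivity)
  obtain ⟨u, hu, hu_norm, hTu⟩ := exists_eq_regularDistribution_of_abs_le_weighted hpq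
    (le_max_right C 0) hv hT
  obtain ⟨d, hd⟩ := exists_ae_eq_const_add_primitive hf hu hc hTu
  refine ⟨_, u, hd, fun a ha b hb => ⟨intervalIntegrable_of_mem_ordConnected hu ha hb, ?_⟩, ?_⟩
  · rw [add_sub_add_left_eq_sub]
    exact intervalIntegral.integral_interval_sub_left
      (intervalIntegrable_of_mem_ordConnected hu hc hb)
      (intervalIntegrable_of_mem_ordConnected hu hc ha)
  · exact (eLpNorm_restrict_le _ _ _ _).trans (hu_norm.trans_eq (by simp [ENNReal.ofReal_max]))

end

/-- Core of Lemma 7 (Em2): if `|∫ f φ'| ≤ C ‖φ/v₁‖_{p'}` for all test functions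
`φ ∈ C_0^∞(0,∞)`, then `f` coincides a.e. on `(0,∞)` with a locally absolutely continuous
function `f̃` whose derivative `u` satisfies `‖v₁ u‖_p ≤ C`. -/
theorem distributional_derivative_representation
    (p p' C : ℝ) (hp : 1 < p) (hp' : p' = p / (p - 1)) (hC : 0 ≤ C)
    (v₁ f : ℝ → ℝ)
    (hv₁ : LocallyIntegrableOn (fun x => |1 / v₁ x| ^ p') (Set.Ioi 0))
    (hf : LocallyIntegrableOn f (Set.Ioi 0))
    (hbound : ∀ φ : ℝ → ℝ, ContDiff ℝ (⊤ : ℕ∞) φ → HasCompactSupport φ →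
      tsupport φ ⊆ Set.Ioi 0 →
      |∫ x in Set.Ioi 0, f x * deriv φ x|
        ≤ C * (∫ x in Set.Ioi 0, |φ x / v₁ x| ^ p') ^ (1/p')) :
    ∃ ftilde u : ℝ → ℝ,
      f =ᵐ[volume.restrict (Set.Ioi 0)] ftilde ∧
      (∀ a b : ℝ, 0 < a → a ≤ b →
        IntervalIntegrable u volume a b ∧ ftilde b - ftilde a = ∫ x in a..b, u x) ∧
      eLpNorm (fun x => v₁ x * u x) (ENNReal.ofReal p) (volume.restrict (Set.Ioi 0))
        ≤ ENNReal.ofReal C := by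
  obtain ⟨ftilde, u, hfu, h_primitive, h_norm⟩ :=
    distributional_derivative_representation_general isOpen_Ioi
      ((Real.holderConjugate_iff_eq_conjExponent hp).mpr hp') hv₁ hf hbound
  exact ⟨ftilde, u, hfu, fun a b ha hab => h_primitive a ha b (ha.trans_le hab), h_norm⟩
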